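/- arXiv:1904.02914 — 2 statements merged into one kernel-verified Lean document; each statement's English description precedes it below -/
import Mathlib

section
/- Suppose X is nonempty and Q ∈ ℝ^{A×A} satisfies Q_{ef} = 0 whenever f is not a successor of e. For i = 1, 2, 3 define the linearization based bound v_i := sup { inf_{x ∈ X} p^T x : p ∈ τ_i(Q) }. Then v_1 ≤ v_2 ≤ v_3. -/
/-!
The three families of linearizations are nested, `tau1 ⊆ tau2 ⊆ tau3`: a vector of weights on arcs
is a matrix of weights on arc-node pairs supported on the incident pairs (for the first inclusion,
`Q` vanishing on non-successors makes the zero matrices `C`, `D` admissible). So the bounds are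
suprema over growing sets, and only the finiteness of the suprema needs an argument, because `sSup`
of an empty or unbounded set of reals is `0`. The sets are nonempty since `tau1` is. They are
bounded above since, for `p ∈ tau3`, weighting the domination inequality for `(e, f)` by `x e * x f`
and summing yields `pᵀ x ≤ xᵀ Q x` at every cycle cover `x`: the degree constraints collapse each
generalized weak sum term to the corresponding part of `p`.
-/

open Finset

/-- A cycle cover of the directed graph with arc set `A`, node set `N`,
starting-node map `src` and ending-node map `tgt`: a 0/1 vector such that
exactly one arc leaves and exactly one arc enters every node. -/
def IsCycleCover {N A : Type*} [Fintype A] [DecidableEq N]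
    (src tgt : A → N) (x : A → ℝ) : Prop :=
  (∀ e, x e = 0 ∨ x e = 1) ∧
  (∀ i : N, ∑ e ∈ univ.filter (fun e => src e = i), x e = 1) ∧
  (∀ i : N, ∑ e ∈ univ.filter (fun e => tgt e = i), x e = 1)

/-- The quadratic form `xᵀ Q x`. -/
def quadForm {A : Type*} [Fintype A] (Q : A → A → ℝ) (x : A → ℝ) : ℝ :=
  ∑ e, ∑ f, Q e f * x e * x f

/-- The set `τ1(Q)` of linearization vectors coming from incident weak sum
matrices dominated by `Q`. -/
def tau1 {N A : Type*} [Fintype A] (src tgt : A → N) (Q : A → A → ℝ) :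
    Set (A → ℝ) :=
  {p | ∃ b c : A → ℝ,
    (∀ e f, src f = tgt e → b e + c f ≤ Q e f) ∧
    ∀ e, p e = b e + c e}

/-- The set `τ2(Q)` of linearization vectors coming from restricted generalized
weak sum matrices dominated by `Q`. -/
def tau2 {N A : Type*} [Fintype N] [Fintype A] (src tgt : A → N)
    (Q : A → A → ℝ) : Set (A → ℝ) :=
  {p | ∃ (b t : A → ℝ) (C : A → N → ℝ) (D : N → A → ℝ),
    (∀ e f, src f = tgt e → b e + C e (tgt f) + D (src e) f + t f ≤ Q e f) ∧
    (∀ e f, src f ≠ tgt e → C e (tgt f) + D (src e) f ≤ Q e f) ∧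
    ∀ e, p e = b e + (∑ k, C e k) + (∑ k, D k e) + t e}

/-- The set `τ3(Q)` of linearization vectors coming from generalized weak sum
matrices dominated by `Q`. -/
def tau3 {N A : Type*} [Fintype N] [Fintype A] (src tgt : A → N)
    (Q : A → A → ℝ) : Set (A → ℝ) :=
  {p | ∃ (B C : A → N → ℝ) (D T : N → A → ℝ),
    (∀ e f, B e (src f) + C e (tgt f) + D (src e) f + T (tgt e) f ≤ Q e f) ∧
    ∀ e, p e = (∑ k, B e k) + (∑ k, C e k) + (∑ k, D k e) + (∑ k, T k e)}

lemma tau1_nonempty {N A : Type*} [Fintype A] (src tgt : A → N) (Q : A → A → ℝ) :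
    (tau1 src tgt Q).Nonempty := by
  refine ⟨fun e => -∑ f, |Q e f|, fun e => -∑ f, |Q e f|, 0, fun e f _ => ?_, by simp⟩
  have h := Finset.single_le_sum (f := fun f => |Q e f|) (fun i _ => abs_nonneg _) (mem_univ f)
  have h2 := neg_abs_le (Q e f)
  simp only [Pi.zero_apply, add_zero] at h ⊢
  linarith

lemma tau1_subset_tau2 {N A : Type*} [Fintype N] [Fintype A] (src tgt : A → N) (Q : A → A → ℝ)
    (hQ0 : ∀ e f, src f ≠ tgt e → Q e f = 0) : tau1 src tgt Q ⊆ tau2 src tgt Q := by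
  rintro p ⟨b, c, h, hp⟩
  refine ⟨b, c, 0, 0, fun e f hef => ?_, fun e f hef => ?_, fun e => ?_⟩
  · simpa using h e f hef
  · simp [hQ0 e f hef]
  · simp [hp e]

/-- The arc weights `b` and `t` are spread out as arc-node matrices supported on the pairs
`(e, tgt e)` and `(src f, f)`, so that they contribute exactly on successor pairs. -/
lemma tau2_subset_tau3 {N A : Type*} [Fintype N] [Fintype A] [DecidableEq N] (src tgt : A → N)
    (Q : A → A → ℝ) : tau2 src tgt Q ⊆ tau3 src tgt Q := by
  rintro p ⟨b, t, C, D, h, h', hp⟩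
  refine ⟨fun e k => if k = tgt e then b e else 0, C, D,
    fun k f => if k = src f then t f else 0, fun e f => ?_, fun e => ?_⟩
  · by_cases hef : src f = tgt e
    · simpa [hef] using h e f hef
    · simpa [hef, Ne.symm hef] using h' e f hef
  · simp [hp e]

/-- If the entries of `x` sum to `1` over each fibre of `g`, then summing `x f * u (g f)` over arcs
is summing `u` over nodes. -/
lemma sum_mul_fiber {N A : Type*} [Fintype N] [Fintype A] [DecidableEq N] (g : A → N) (x : A → ℝ)
    (hx : ∀ i : N, ∑ e ∈ univ.filter (fun e => g e = i), x e = 1) (u : N → ℝ) :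
    ∑ f, x f * u (g f) = ∑ k, u k := by
  rw [← Finset.sum_fiberwise univ g]
  refine Finset.sum_congr rfl fun k _ => ?_
  calc ∑ f ∈ univ.filter (fun f => g f = k), x f * u (g f)
      = ∑ f ∈ univ.filter (fun f => g f = k), x f * u k :=
        Finset.sum_congr rfl fun f hf => by rw [(mem_filter.1 hf).2]
    _ = u k := by rw [← Finset.sum_mul, hx, one_mul]

/-- A linearization vector underestimates the quadratic form at every cycle cover. -/
lemma linear_le_quadForm {N A : Type*} [Fintype N] [Fintype A] [DecidableEq N] {src tgt : A → N}
    {Q : A → A → ℝ} {p : A → ℝ} (hp : p ∈ tau3 src tgt Q) {x : A → ℝ}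
    (hx : IsCycleCover src tgt x) : ∑ e, p e * x e ≤ quadForm Q x := by
  obtain ⟨B, C, D, T, h, hp⟩ := hp
  obtain ⟨h01, hs, ht⟩ := hx
  have h0 : ∀ e, 0 ≤ x e := fun e => by rcases h01 e with h | h <;> simp [h]
  have hB : ∑ e, ∑ f, B e (src f) * x e * x f = ∑ e, (∑ k, B e k) * x e :=
    Finset.sum_congr rfl fun e _ => by
      rw [← sum_mul_fiber src x hs, Finset.sum_mul]
      exact Finset.sum_congr rfl fun f _ => by ring
  have hC : ∑ e, ∑ f, C e (tgt f) * x e * x f = ∑ e, (∑ k, C e k) * x e :=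
    Finset.sum_congr rfl fun e _ => by
      rw [← sum_mul_fiber tgt x ht, Finset.sum_mul]
      exact Finset.sum_congr rfl fun f _ => by ring
  have hD : ∑ e, ∑ f, D (src e) f * x e * x f = ∑ f, (∑ k, D k f) * x f := by
    rw [Finset.sum_comm]
    refine Finset.sum_congr rfl fun f _ => ?_
    rw [← sum_mul_fiber src x hs (fun k => D k f), Finset.sum_mul]
    exact Finset.sum_congr rfl fun e _ => by ring
  have hT : ∑ e, ∑ f, T (tgt e) f * x e * x f = ∑ f, (∑ k, T k f) * x f := by
    rw [Finset.sum_comm]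
    refine Finset.sum_congr rfl fun f _ => ?_
    rw [← sum_mul_fiber tgt x ht (fun k => T k f), Finset.sum_mul]
    exact Finset.sum_congr rfl fun e _ => by ring
  calc ∑ e, p e * x e
      = ∑ e, ∑ f, (B e (src f) + C e (tgt f) + D (src e) f + T (tgt e) f) * x e * x f := by
        simp only [hp, add_mul, Finset.sum_add_distrib, hB, hC, hD, hT]
    _ ≤ quadForm Q x :=
        Finset.sum_le_sum fun e _ => Finset.sum_le_sum fun f _ =>
          mul_le_mul_of_nonneg_right (mul_le_mul_of_nonneg_right (h e f) (h0 e)) (h0 f)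

lemma bddBelow_linear {N A : Type*} [Fintype A] [DecidableEq N] (src tgt : A → N) (p : A → ℝ) :
    BddBelow {w : ℝ | ∃ x, IsCycleCover src tgt x ∧ w = ∑ e, p e * x e} := by
  refine ⟨∑ e, -|p e|, ?_⟩
  rintro _ ⟨x, hx, rfl⟩
  refine Finset.sum_le_sum fun e _ => ?_
  rcases hx.1 e with h | h
  · simp [h]
  · simpa [h] using neg_abs_le (p e)

lemma bddAbove_bounds {N A : Type*} [Fintype N] [Fintype A] [DecidableEq N] (src tgt : A → N)
    (Q : A → A → ℝ) (hX : ∃ x, IsCycleCover src tgt x) :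
    BddAbove {v : ℝ | ∃ p ∈ tau3 src tgt Q,
      v = sInf {w : ℝ | ∃ x, IsCycleCover src tgt x ∧ w = ∑ e, p e * x e}} := by
  obtain ⟨x, hx⟩ := hX
  refine ⟨quadForm Q x, ?_⟩
  rintro _ ⟨p, hp, rfl⟩
  exact (csInf_le (bddBelow_linear src tgt p) ⟨x, hx, rfl⟩).trans (linear_le_quadForm hp hx)

theorem stmt_11 {N A : Type*} [Fintype N] [Fintype A] [DecidableEq N]
    (src tgt : A → N) (Q : A → A → ℝ)
    (hX : ∃ x, IsCycleCover src tgt x)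
    (hQ0 : ∀ e f, src f ≠ tgt e → Q e f = 0) :
    sSup {v : ℝ | ∃ p ∈ tau1 src tgt Q,
        v = sInf {w : ℝ | ∃ x, IsCycleCover src tgt x ∧ w = ∑ e, p e * x e}} ≤
      sSup {v : ℝ | ∃ p ∈ tau2 src tgt Q,
        v = sInf {w : ℝ | ∃ x, IsCycleCover src tgt x ∧ w = ∑ e, p e * x e}} ∧
    sSup {v : ℝ | ∃ p ∈ tau2 src tgt Q,
        v = sInf {w : ℝ | ∃ x, IsCycleCover src tgt x ∧ w = ∑ e, p e * x e}} ≤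
      sSup {v : ℝ | ∃ p ∈ tau3 src tgt Q,
        v = sInf {w : ℝ | ∃ x, IsCycleCover src tgt x ∧ w = ∑ e, p e * x e}} := by
  have h12 := tau1_subset_tau2 src tgt Q hQ0
  have h23 := tau2_subset_tau3 src tgt Q
  have hbdd := bddAbove_bounds src tgt Q hX
  obtain ⟨p, hp⟩ := tau1_nonempty src tgt Q
  constructor
  · refine csSup_le_csSup (hbdd.mono ?_) ⟨_, p, hp, rfl⟩ ?_
    · rintro v ⟨q, hq, hv⟩
      exact ⟨q, h23 hq, hv⟩
    · rintro v ⟨q, hq, hv⟩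
      exact ⟨q, h12 hq, hv⟩
  · refine csSup_le_csSup hbdd ⟨_, p, h12 hp, rfl⟩ ?_
    rintro v ⟨q, hq, hv⟩
    exact ⟨q, h23 hq, hv⟩
end

section
/- Assume X is nonempty and for every arc e there exists a cycle cover x ∈ X with x_e = 1. Define τ_GL(Q) := {p̂ ∈ ℝ^A : ∃ B, C ∈ ℝ^{A×N}, t ∈ ℝ^A with B_{e,f⁺} + C_{e,f⁻} ≤ Q_{ef} for all arcs e ≠ f, B_{e,e⁺} + C_{e,e⁻} + t_e ≤ Q_{ee} for all arcs e, and p̂_e = t_e + Σ_{i∈N} B_{e,i} + Σ_{i∈N} C_{e,i} for all e}, and define the linearization based bound v_LBB^GL := sup { inf_{x ∈ P} p̂^T x : p̂ ∈ τ_GL(Q) }. Then v_LBB^GL = v_GL, i.e. the Gilmore–Lawler bound is a linearization based bound. -/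
/-!
For a fixed arc `e`, the row `(B e, C e, t e)` of a certificate of membership in `tauGL` is a dual
feasible point of the linear program `min {Q e · x : x ∈ P, x e = 1}` defining `glz e`, and
`p e` is its dual objective value. Weak duality (`tauGL_le_glz`) gives `p e ≤ glz e`, hence, since
the points of `P` are nonnegative, every linearization based bound is at most `vGL`.

Conversely every `w < glz e` is the value of some dual feasible row (`exists_row`). This is proved
by Lagrangian duality over the compact simplex `{x ≥ 0, ∑ x = |N|}`, which contains `P`: the image
of the simplex under `x ↦ (constraint defects, Q e · x - w)` is compact and convex and misses the
ray `{0} × (-∞, 0]`, so a hyperplane separates them (`exists_multiplier`). Evaluating the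
separating functional at the vertices of the simplex gives the dual constraints. Taking
`p = glz - δ` for all arcs at once costs at most `δ |N|` in the bound, since `∑ x = |N|` on `P`,
and `δ → 0` gives the equality. Approximating `glz e` from below means that attainment of the
dual optimum is never needed.
-/

open Finset

/-- Membership in the fractional cycle cover polytope `P`. -/
def InPoly {N A : Type*} [Fintype A] [DecidableEq N]
    (src tgt : A → N) (x : A → ℝ) : Prop :=
  (∀ e, 0 ≤ x e) ∧
  (∀ i : N, ∑ e ∈ univ.filter (fun e => src e = i), x e = 1) ∧
  (∀ i : N, ∑ e ∈ univ.filter (fun e => tgt e = i), x e = 1)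

/-- `z_e`: the minimum interaction cost of arc `e` with a fractional cycle
cover containing `e`. -/
noncomputable def glz {N A : Type*} [Fintype A] [DecidableEq N]
    (src tgt : A → N) (Q : A → A → ℝ) (e : A) : ℝ :=
  sInf {w : ℝ | ∃ x, InPoly src tgt x ∧ x e = 1 ∧ w = ∑ f, Q e f * x f}

/-- The Gilmore–Lawler bound `v_GL`. -/
noncomputable def vGL {N A : Type*} [Fintype A] [DecidableEq N]
    (src tgt : A → N) (Q : A → A → ℝ) : ℝ :=
  sInf {v : ℝ | ∃ x, InPoly src tgt x ∧ v = ∑ e, glz src tgt Q e * x e}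

/-- The set `τ_GL(Q)` of linearization vectors coming from matrices satisfying
the Gilmore–Lawler sufficient condition for linearizability, dominated by `Q`. -/
def tauGL {N A : Type*} [Fintype N] [Fintype A] (src tgt : A → N)
    (Q : A → A → ℝ) : Set (A → ℝ) :=
  {p | ∃ (B C : A → N → ℝ) (t : A → ℝ),
    (∀ e f, e ≠ f → B e (src f) + C e (tgt f) ≤ Q e f) ∧
    (∀ e, B e (src e) + C e (tgt e) + t e ≤ Q e e) ∧
    ∀ e, p e = t e + (∑ i, B e i) + (∑ i, C e i)}

/-- Lagrangian duality for a linear program over a compact convex set `S` with linear equality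
constraints: a strict lower bound `w` on the feasible values is certified by multipliers `y`. -/
lemma exists_multiplier {M A : Type*} [Fintype M] [Fintype A] (S : Set (A → ℝ))
    (hS : IsCompact S) (hSc : Convex ℝ S) (G : M → A → ℝ) (d : M → ℝ) (c : A → ℝ) (w : ℝ)
    (hne : ∃ x ∈ S, ∀ m, ∑ a, G m a * x a = d m)
    (hw : ∀ x ∈ S, (∀ m, ∑ a, G m a * x a = d m) → w < ∑ a, c a * x a) :
    ∃ y : M → ℝ, ∀ x ∈ S, w + ∑ m, y m * (∑ a, G m a * x a - d m) < ∑ a, c a * x a := by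
  classical
  let L : (A → ℝ) → (M → ℝ) × ℝ := fun x =>
    (fun m => ∑ a, G m a * x a - d m, ∑ a, c a * x a - w)
  have hLc : Continuous L := by fun_prop
  have hLconv : Convex ℝ (L '' S) := by
    rintro _ ⟨x, hx, rfl⟩ _ ⟨x', hx', rfl⟩ a b ha hb hab
    refine ⟨a • x + b • x', hSc hx hx' ha hb hab, ?_⟩
    have key : ∀ (g : A → ℝ) (r : ℝ), ∑ i, g i * (a • x + b • x') i - r
        = a * (∑ i, g i * x i - r) + b * (∑ i, g i * x' i - r) := by
      intro g r
      have : ∑ i, g i * (a • x + b • x') i = a * ∑ i, g i * x i + b * ∑ i, g i * x' i := by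
        rw [Finset.mul_sum, Finset.mul_sum, ← Finset.sum_add_distrib]
        refine Finset.sum_congr rfl fun i _ => ?_
        simp only [Pi.add_apply, Pi.smul_apply, smul_eq_mul]; ring
      rw [this]; linear_combination (-r) * (-hab)
    refine Prod.ext ?_ ?_
    · funext m; exact key (G m) (d m)
    · exact key c w
  have hRc : IsClosed (({0} : Set (M → ℝ)) ×ˢ Set.Iic (0 : ℝ)) :=
    isClosed_singleton.prod isClosed_Iic
  have hRconv : Convex ℝ (({0} : Set (M → ℝ)) ×ˢ Set.Iic (0 : ℝ)) :=
    (convex_singleton _).prod (convex_Iic _)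
  have hdisj : Disjoint (L '' S) (({0} : Set (M → ℝ)) ×ˢ Set.Iic (0 : ℝ)) := by
    rw [Set.disjoint_left]
    rintro _ ⟨x, hx, rfl⟩ ⟨h1, h2⟩
    have h1' : ∀ m, ∑ a, G m a * x a = d m := fun m => sub_eq_zero.1 (congrFun h1 m)
    have h2' : ∑ a, c a * x a - w ≤ 0 := h2
    linarith [hw x hx h1']
  obtain ⟨f, u, v, hu, huv, hv⟩ :=
    geometric_hahn_banach_compact_closed hLconv (hS.image hLc) hRconv hRc hdisj
  have hv0 : v < 0 := by
    have h0 := hv (0, 0) (by simp)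
    rwa [show ((0, 0) : (M → ℝ) × ℝ) = 0 from rfl, map_zero] at h0
  set lam : ℝ := f (0, 1) with hlam
  have hf : ∀ (q : M → ℝ) (r : ℝ),
      f (q, r) = ∑ m, q m * f (Pi.single m 1, 0) + r * lam := by
    intro q r
    have e1 : (q, r) = ∑ m, q m • ((Pi.single m 1, 0) : (M → ℝ) × ℝ) + r • (0, 1) := by
      refine Prod.ext ?_ ?_
      · funext j
        simp [Prod.fst_sum, Finset.sum_apply, Pi.single_apply]
      · simp [Prod.snd_sum]
    rw [e1, map_add, map_sum, map_smul, smul_eq_mul, ← hlam]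
    simp only [map_smul, smul_eq_mul]
  have hL : ∀ x ∈ S, ∑ m, (∑ a, G m a * x a - d m) * f (Pi.single m 1, 0)
      + (∑ a, c a * x a - w) * lam < 0 := by
    intro x hx
    have := hu (L x) ⟨x, hx, rfl⟩
    rw [show L x = (_, _) from rfl, hf] at this
    linarith
  -- the coefficient of the objective does not vanish, because a feasible point exists
  have hneg : lam < 0 := by
    obtain ⟨x, hx, hfeas⟩ := hne
    have h := hL x hx
    simp only [hfeas, sub_self, zero_mul, Finset.sum_const_zero, zero_add] at h
    have := hw x hx hfeas
    by_contra! hcon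
    nlinarith
  refine ⟨fun m => -(f (Pi.single m 1, 0) / lam), fun x hx => ?_⟩
  have h := hL x hx
  have e2 : ∑ m, -(f (Pi.single m 1, 0) / lam) * (∑ a, G m a * x a - d m)
      = -(∑ m, (∑ a, G m a * x a - d m) * f (Pi.single m 1, 0)) / lam := by
    rw [neg_div, Finset.sum_div, ← Finset.sum_neg_distrib]
    exact Finset.sum_congr rfl fun m _ => by ring
  rw [e2]
  have : -(∑ m, (∑ a, G m a * x a - d m) * f (Pi.single m 1, 0)) / lam
      < ∑ a, c a * x a - w := by
    rw [div_lt_iff_of_neg hneg]; linarith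
  linarith

section
variable {N A : Type*} [Fintype A] [DecidableEq N] {src tgt : A → N}

lemma IsCycleCover.inPoly {x : A → ℝ} (h : IsCycleCover src tgt x) : InPoly src tgt x :=
  ⟨fun e => by rcases h.1 e with h | h <;> simp [h], h.2⟩

lemma InPoly.le_one {x : A → ℝ} (h : InPoly src tgt x) (e : A) : x e ≤ 1 := by
  rw [← h.2.1 (src e)]
  exact Finset.single_le_sum (f := x) (fun i _ => h.1 i) (by simp)

lemma InPoly.neg_sum_abs_le {x : A → ℝ} (h : InPoly src tgt x) (p : A → ℝ) :
    -∑ e, |p e| ≤ ∑ e, p e * x e := by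
  rw [← Finset.sum_neg_distrib]
  refine Finset.sum_le_sum fun e _ => ?_
  nlinarith [neg_abs_le (p e), h.1 e, h.le_one e, abs_nonneg (p e)]

lemma InPoly.bddBelow (src tgt : A → N) (p : A → ℝ) :
    BddBelow {w : ℝ | ∃ x, InPoly src tgt x ∧ w = ∑ e, p e * x e} :=
  ⟨-∑ e, |p e|, by rintro _ ⟨x, hx, rfl⟩; exact hx.neg_sum_abs_le p⟩

lemma glz_le (Q : A → A → ℝ) (e : A) {x : A → ℝ} (hx : InPoly src tgt x) (hxe : x e = 1) :
    glz src tgt Q e ≤ ∑ f, Q e f * x f :=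
  csInf_le ⟨-∑ f, |Q e f|, by rintro _ ⟨x, hx, -, rfl⟩; exact hx.neg_sum_abs_le _⟩ ⟨x, hx, hxe, rfl⟩

variable [Fintype N]

lemma sum_fiber_mul (s : A → N) (b : N → ℝ) (x : A → ℝ) :
    ∑ f, b (s f) * x f = ∑ i, b i * ∑ e ∈ univ.filter (fun e => s e = i), x e := by
  rw [← Finset.sum_fiberwise univ s]
  refine Finset.sum_congr rfl fun i _ => ?_
  rw [Finset.mul_sum]
  refine Finset.sum_congr rfl fun f hf => ?_
  rw [(Finset.mem_filter.1 hf).2]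

lemma InPoly.sum_src {x : A → ℝ} (h : InPoly src tgt x) (b : N → ℝ) :
    ∑ f, b (src f) * x f = ∑ i, b i := by
  simp [sum_fiber_mul, h.2.1]

lemma InPoly.sum_tgt {x : A → ℝ} (h : InPoly src tgt x) (b : N → ℝ) :
    ∑ f, b (tgt f) * x f = ∑ i, b i := by
  simp [sum_fiber_mul, h.2.2]

lemma InPoly.sum_eq {x : A → ℝ} (h : InPoly src tgt x) : ∑ f, x f = Fintype.card N := by
  simpa using h.sum_src (fun _ => 1)

variable [DecidableEq A]

/-- Weak duality for the linear program defining `glz`. -/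
lemma tauGL_le_glz {Q : A → A → ℝ} {p : A → ℝ} (hp : p ∈ tauGL src tgt Q) (e : A)
    (he : ∃ x, InPoly src tgt x ∧ x e = 1) : p e ≤ glz src tgt Q e := by
  obtain ⟨B, C, t, h1, h2, h3⟩ := hp
  obtain ⟨x₀, hx₀, hx₀e⟩ := he
  refine le_csInf ⟨_, x₀, hx₀, hx₀e, rfl⟩ ?_
  rintro _ ⟨x, hx, hxe, rfl⟩
  calc p e = ∑ f, (B e (src f) + C e (tgt f) + if f = e then t e else 0) * x f := by
        simp only [add_mul, Finset.sum_add_distrib, hx.sum_src (B e), hx.sum_tgt (C e), ite_mul,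
          zero_mul, Finset.sum_ite_eq', Finset.mem_univ, if_true, hxe, h3 e]
        ring
    _ ≤ _ := by
        refine Finset.sum_le_sum fun f _ => mul_le_mul_of_nonneg_right ?_ (hx.1 f)
        by_cases hf : f = e
        · subst hf; simpa using h2 f
        · simpa [hf] using h1 e f (Ne.symm hf)

/-- Approximate strong duality: every value below `glz e` is the dual objective value of a
feasible row of a `tauGL` certificate. -/
lemma exists_row {Q : A → A → ℝ} (e : A) (he : ∃ x, InPoly src tgt x ∧ x e = 1) {w : ℝ}
    (hw : w < glz src tgt Q e) :
    ∃ (b c : N → ℝ) (t : ℝ), (∀ f, e ≠ f → b (src f) + c (tgt f) ≤ Q e f) ∧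
      b (src e) + c (tgt e) + t ≤ Q e e ∧ w = t + (∑ i, b i) + ∑ i, c i := by
  have hn : (0 : ℝ) < Fintype.card N := by
    have : Nonempty N := ⟨src e⟩
    exact_mod_cast Fintype.card_pos
  set n : ℝ := (Fintype.card N : ℝ)
  let S : Set (A → ℝ) := (fun x => n • x) '' stdSimplex ℝ A
  have hS : IsCompact S := (isCompact_stdSimplex ℝ A).image (by fun_prop)
  have hSc : Convex ℝ S := (convex_stdSimplex ℝ A).smul n
  have hPS : ∀ x, InPoly src tgt x → x ∈ S := by
    intro x hx
    refine ⟨n⁻¹ • x, ⟨fun f => mul_nonneg (inv_nonneg.2 hn.le) (hx.1 f), ?_⟩, ?_⟩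
    · simp only [Pi.smul_apply, smul_eq_mul, ← Finset.mul_sum, hx.sum_eq]
      exact inv_mul_cancel₀ hn.ne'
    · simp [smul_smul, hn.ne']
  let G : N ⊕ N ⊕ Unit → A → ℝ := Sum.elim (fun i f => if src f = i then 1 else 0)
    (Sum.elim (fun i f => if tgt f = i then 1 else 0) (fun _ f => if f = e then 1 else 0))
  have hG : ∀ x : A → ℝ, (∀ m, ∑ a, G m a * x a = 1) ↔
      (∀ i : N, ∑ e ∈ univ.filter (fun e => src e = i), x e = 1) ∧
      (∀ i : N, ∑ e ∈ univ.filter (fun e => tgt e = i), x e = 1) ∧ x e = 1 := by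
    intro x
    simp [G, Sum.forall, Finset.sum_filter]
  obtain ⟨y, hy⟩ := exists_multiplier S hS hSc G (fun _ => 1) (Q e) w
    (by
      obtain ⟨x, hx, hxe⟩ := he
      exact ⟨x, hPS x hx, (hG x).2 ⟨hx.2.1, hx.2.2, hxe⟩⟩)
    (by
      rintro x ⟨x', hx', rfl⟩ hfeas
      obtain ⟨h1, h2, h3⟩ := (hG _).1 hfeas
      exact hw.trans_le (glz_le Q e
        ⟨fun f => mul_nonneg hn.le (hx'.1 f), h1, h2⟩ h3))
  set β : N → ℝ := fun i => y (.inl i)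
  set γ : N → ℝ := fun i => y (.inr (.inl i))
  set τ : ℝ := y (.inr (.inr ()))
  set k : ℝ := w - ((∑ i, β i) + (∑ i, γ i) + τ) with hk
  -- the multiplier inequality at the vertex of the scaled simplex belonging to the arc `f`
  have hvert : ∀ f, k / n + β (src f) + γ (tgt f) + (if f = e then τ else 0) ≤ Q e f := by
    intro f
    have h := hy (n • Pi.single f 1) ⟨_, single_mem_stdSimplex ℝ f, rfl⟩
    simp only [Fintype.sum_sum_type, G, Sum.elim_inl, Sum.elim_inr, Pi.smul_apply, smul_eq_mul,
      Pi.single_apply, mul_ite, mul_one, mul_zero, Finset.sum_ite_eq', Finset.mem_univ, if_true,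
      ite_mul, one_mul, zero_mul, mul_sub, Finset.sum_sub_distrib, Finset.sum_ite_eq,
      Finset.univ_unique, Finset.sum_singleton] at h
    have h' : k + n * (β (src f) + γ (tgt f) + (if f = e then τ else 0)) < n * Q e f := by
      have e3 : (if f = e then τ * n else 0) = n * (if f = e then τ else 0) := by
        split_ifs <;> ring
      have e4 : τ = y (.inr (.inr default)) := rfl
      rw [hk]
      simp only [← e4, e3] at h
      linarith
    have : k < n * (Q e f - (β (src f) + γ (tgt f) + (if f = e then τ else 0))) := by linarith
    have := (div_lt_iff₀' hn).2 this
    linarith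
  -- the constant `k` is spread evenly over the nodes, as each arc leaves exactly one node
  refine ⟨fun i => β i + k / n, γ, τ, fun f hf => ?_, ?_, ?_⟩
  · have := hvert f
    rw [if_neg (Ne.symm hf)] at this
    linarith
  · have := hvert e
    rw [if_pos rfl] at this
    linarith
  · have : ∑ _i : N, k / n = k := by
      rw [Finset.sum_const, Finset.card_univ, nsmul_eq_mul]
      exact mul_div_cancel₀ k hn.ne'
    rw [Finset.sum_add_distrib, this, hk]
    ring

end

theorem stmt_14 {N A : Type*} [Fintype N] [Fintype A] [DecidableEq N] [DecidableEq A]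
    (src tgt : A → N) (Q : A → A → ℝ)
    (hX : ∃ x, IsCycleCover src tgt x)
    (hcov : ∀ e, ∃ x, IsCycleCover src tgt x ∧ x e = 1) :
    sSup {v : ℝ | ∃ p ∈ tauGL src tgt Q,
        v = sInf {w : ℝ | ∃ x, InPoly src tgt x ∧ w = ∑ e, p e * x e}} =
      vGL src tgt Q := by
  obtain ⟨x₀, hx₀⟩ := hX
  have he : ∀ e, ∃ x, InPoly src tgt x ∧ x e = 1 := fun e =>
    let ⟨x, hx, hxe⟩ := hcov e
    ⟨x, hx.inPoly, hxe⟩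
  have happ : ∀ δ > 0, ∃ p ∈ tauGL src tgt Q, ∀ e, p e = glz src tgt Q e - δ := by
    intro δ hδ
    choose B C t h1 h2 h3 using fun e =>
      exists_row e (he e) (show glz src tgt Q e - δ < glz src tgt Q e by linarith)
    exact ⟨fun e => glz src tgt Q e - δ, ⟨B, C, t, h1, h2, h3⟩, fun _ => rfl⟩
  apply csSup_eq_of_forall_le_of_forall_lt_exists_gt
  · obtain ⟨p, hp, -⟩ := happ 1 one_pos
    exact ⟨_, p, hp, rfl⟩
  · rintro _ ⟨p, hp, rfl⟩
    refine le_csInf ⟨_, x₀, hx₀.inPoly, rfl⟩ ?_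
    rintro _ ⟨x, hx, rfl⟩
    exact (csInf_le (InPoly.bddBelow src tgt p) ⟨x, hx, rfl⟩).trans <|
      Finset.sum_le_sum fun e _ => mul_le_mul_of_nonneg_right (tauGL_le_glz hp e (he e)) (hx.1 e)
  · intro u hu
    -- `card N + 1` rather than `card N` in the denominator keeps it positive for the empty graph
    set δ : ℝ := (vGL src tgt Q - u) / (Fintype.card N + 1) with hδ
    have hpos : (0 : ℝ) < Fintype.card N + 1 := by positivity
    have hδ0 : 0 < δ := div_pos (by linarith) hpos
    have hδ1 : δ * (Fintype.card N + 1) = vGL src tgt Q - u := div_mul_cancel₀ _ hpos.ne'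
    obtain ⟨p, hp, hpz⟩ := happ δ hδ0
    refine ⟨_, ⟨p, hp, rfl⟩, ?_⟩
    have : vGL src tgt Q - δ * Fintype.card N
        ≤ sInf {w : ℝ | ∃ x, InPoly src tgt x ∧ w = ∑ e, p e * x e} := by
      refine le_csInf ⟨_, x₀, hx₀.inPoly, rfl⟩ ?_
      rintro _ ⟨x, hx, rfl⟩
      have h1 : vGL src tgt Q ≤ ∑ e, glz src tgt Q e * x e :=
        csInf_le (InPoly.bddBelow src tgt _) ⟨x, hx, rfl⟩
      have h2 : ∑ e, p e * x e = ∑ e, glz src tgt Q e * x e - δ * Fintype.card N := by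
        simp only [hpz, sub_mul, Finset.sum_sub_distrib, ← Finset.mul_sum, hx.sum_eq]
      linarith
    linarith
end
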